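/- Let r : (−∞,b̃) → ℝ be smooth and satisfy Setting RS, i.e. for every z < b̃: r(z) > 0, 0 < r'(z) ≤ 1/√2 and r(z)·r''(z) > 2·r'(z)²·(r'(z)²+1). Let z : [0,∞) → (−∞,b̃) be differentiable and satisfy the ODE z'(t) = −r'(z(t))/( r(z(t))·(r'(z(t))²+1) ) for all t ≥ 0. Then z(t) → −∞ as t → ∞. -/

import Mathlib

/-!
The flow only moves downwards. A trajectory not tending to `-∞` is therefore confined to a compact
interval of heights, on which the continuous positive speed has a positive minimum. Moving down at
least at that speed for all time, the trajectory would leave the interval.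
-/

open Filter Set

theorem tendsto_atTop_atBot_of_antitoneOn_Ici {α β : Type*} [Preorder α] [Preorder β]
    {f : α → β} {a : α} (hf : AntitoneOn f (Ici a)) (h : ∀ M, ∃ t ∈ Ici a, f t ≤ M) :
    Tendsto f atTop atBot := by
  rw [tendsto_atBot]
  intro M
  obtain ⟨t, ht, htM⟩ := h M
  filter_upwards [eventually_ge_atTop t] with u hu
  exact (hf ht (le_trans ht hu) hu).trans htM

section RealDerivative

variable {f f' : ℝ → ℝ} {a : ℝ}

theorem antitoneOn_of_forall_hasDerivWithinAt_nonpos {D : Set ℝ} (hD : Convex ℝ D)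
    (hf : ∀ t ∈ D, HasDerivWithinAt f (f' t) D t) (hf' : ∀ t ∈ D, f' t ≤ 0) : AntitoneOn f D :=
  antitoneOn_of_hasDerivWithinAt_nonpos hD
    (fun t ht => (hf t ht).continuousWithinAt)
    (fun t ht => (hf t (interior_subset ht)).mono interior_subset)
    (fun t ht => hf' t (interior_subset ht))

theorem tendsto_atBot_of_hasDerivWithinAt_le_of_neg {C : ℝ} (hC : C < 0)
    (hf : ∀ t ∈ Ici a, HasDerivWithinAt f (f' t) (Ici a) t) (hf' : ∀ t ∈ Ici a, f' t ≤ C) :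
    Tendsto f atTop atBot := by
  have hanti : AntitoneOn (fun t => f t - C * t) (Ici a) :=
    antitoneOn_of_forall_hasDerivWithinAt_nonpos (convex_Ici a)
      (fun t ht => (hf t ht).sub ((hasDerivWithinAt_id t _).const_mul C))
      (fun t ht => by simpa using hf' t ht)
  have hline : Tendsto (fun t => C * t + (f a - C * a)) atTop atBot :=
    tendsto_atBot_add_const_right _ _ (tendsto_id.const_mul_atTop_of_neg hC)
  refine tendsto_atBot_mono' atTop ?_ hline
  filter_upwards [eventually_ge_atTop a] with t ht
  linarith [hanti self_mem_Ici ht ht]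

theorem tendsto_atBot_of_hasDerivWithinAt_le_neg_comp {G : ℝ → ℝ} {s : Set ℝ}
    (hs : IsLowerSet s) (hG : LowerSemicontinuousOn G s) (hGpos : ∀ w ∈ s, 0 < G w)
    (hfs : ∀ t ∈ Ici a, f t ∈ s) (hf : ∀ t ∈ Ici a, HasDerivWithinAt f (f' t) (Ici a) t)
    (hf' : ∀ t ∈ Ici a, f' t ≤ -G (f t)) : Tendsto f atTop atBot := by
  have hanti : AntitoneOn f (Ici a) :=
    antitoneOn_of_forall_hasDerivWithinAt_nonpos (convex_Ici a) hf
      fun t ht => (hf' t ht).trans (neg_nonpos.2 (hGpos _ (hfs t ht)).le)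
  by_contra hnot
  obtain ⟨M, hM⟩ : ∃ M, ∀ t ∈ Ici a, M < f t := by
    contrapose! hnot
    exact tendsto_atTop_atBot_of_antitoneOn_Ici hanti hnot
  have hmem : ∀ t ∈ Ici a, f t ∈ Icc M (f a) :=
    fun t ht => ⟨(hM t ht).le, hanti self_mem_Ici ht ht⟩
  have hsub : Icc M (f a) ⊆ s := fun w hw => hs hw.2 (hfs a self_mem_Ici)
  obtain ⟨w, hw, hmin⟩ :=
    (hG.mono hsub).exists_isMinOn ⟨f a, hmem a self_mem_Ici⟩ isCompact_Icc
  exact hnot <| tendsto_atBot_of_hasDerivWithinAt_le_of_neg (neg_lt_zero.2 (hGpos w (hsub hw))) hf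
    fun t ht => (hf' t ht).trans (neg_le_neg (hmin (hmem t ht)))

end RealDerivative

/-- The speed `G(w) = r'(w) / (r(w) (r'(w)² + 1))` at which the parallel circle at height `w`, on
the surface of revolution with profile `r`, descends under the curve shortening flow. -/
noncomputable def parallelSpeed (r : ℝ → ℝ) (w : ℝ) : ℝ :=
  deriv r w / (r w * ((deriv r w) ^ 2 + 1))

theorem parallelSpeed_pos {r : ℝ → ℝ} {w : ℝ} (hr : 0 < r w) (hr' : 0 < deriv r w) :
    0 < parallelSpeed r w := by
  unfold parallelSpeed
  positivity

theorem continuousOn_parallelSpeed {r : ℝ → ℝ} {s : Set ℝ} (hs : IsOpen s)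
    (hr : ContDiffOn ℝ 1 r s) (hr0 : ∀ w ∈ s, r w ≠ 0) : ContinuousOn (parallelSpeed r) s := by
  have hr' : ContinuousOn (deriv r) s := hr.continuousOn_deriv_of_isOpen hs le_rfl
  exact hr'.div (hr.continuousOn.mul ((hr'.pow 2).add continuousOn_const))
    fun w hw => mul_ne_zero (hr0 w hw) (by positivity)

theorem circle_flow_tendsto_atBot_general {r z : ℝ → ℝ} {s : Set ℝ} {a : ℝ}
    (hs : IsOpen s) (hlower : IsLowerSet s) (hr : ContDiffOn ℝ 1 r s)
    (hpos : ∀ w ∈ s, 0 < r w) (hderiv : ∀ w ∈ s, 0 < deriv r w) (hz : ∀ t ∈ Ici a, z t ∈ s)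
    (hode : ∀ t ∈ Ici a, HasDerivWithinAt z (-parallelSpeed r (z t)) (Ici a) t) :
    Tendsto z atTop atBot :=
  tendsto_atBot_of_hasDerivWithinAt_le_neg_comp hlower
    (continuousOn_parallelSpeed hs hr fun w hw => (hpos w hw).ne').lowerSemicontinuousOn
    (fun w hw => parallelSpeed_pos (hpos w hw) (hderiv w hw)) hz hode fun _ _ => le_rfl

/-- Under Setting RS on `(−∞, b̃)`, any solution `z : [0,∞) → (−∞, b̃)` of the ODE
`z'(t) = −r'(z(t))/( r(z(t))(r'(z(t))²+1) )` (the curve shortening flow of the parallel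
circles) tends to `−∞` as `t → ∞`. -/
theorem circle_flow_tendsto_atBot (r : ℝ → ℝ) (btilde : ℝ)
    (hr : ContDiffOn ℝ (⊤ : ℕ∞) r (Set.Iio btilde))
    (hRS : ∀ w < btilde, 0 < r w ∧ (0 < deriv r w ∧ deriv r w ≤ 1 / Real.sqrt 2) ∧
      r w * deriv (deriv r) w > 2 * (deriv r w) ^ 2 * ((deriv r w) ^ 2 + 1))
    (z : ℝ → ℝ) (hz : ∀ t ≥ (0 : ℝ), z t < btilde)
    (hode : ∀ t ≥ (0 : ℝ),
      HasDerivWithinAt z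
        (-(deriv r (z t) / (r (z t) * ((deriv r (z t)) ^ 2 + 1)))) (Set.Ici 0) t) :
    Filter.Tendsto z Filter.atTop Filter.atBot :=
  circle_flow_tendsto_atBot_general isOpen_Iio (isLowerSet_Iio btilde)
    (hr.of_le (by exact_mod_cast le_top)) (fun w hw => (hRS w hw).1)
    (fun w hw => (hRS w hw).2.1.1) hz hode
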